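/- For every fixed integer k ≥ 1, with high probability the number of edges of O_k equals (o_k + o(1))·n, where o_k = k/2 + (1/4)·Σ_{i=0}^{k−1} binom(2i,i)·2^{−2i}. -/

import Mathlib

open Finset Filter

namespace RGP

/-- Number of edges of the complete graph on `n` vertices. -/
def numEdges (n : ℕ) : ℕ := n * (n - 1) / 2

/-- An edge of the complete graph on `Fin n` (an unordered pair of distinct vertices). -/
abbrev EdgeType (n : ℕ) := {e : Sym2 (Fin n) // ¬ e.IsDiag}

/-- A uniformly random permutation of the edges of `K_n` is modelled by a bijection
`σ` between positions `Fin (numEdges n)` and edges; `σ i` is the edge `e_{i+1}`. -/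
abbrev Ord (n : ℕ) := Fin (numEdges n) ≃ EdgeType n

/-- Degree of a vertex `v` in a set `S` of edges. -/
def deg {n : ℕ} (S : Finset (Sym2 (Fin n))) (v : Fin n) : ℕ :=
  (S.filter (fun e => v ∈ e)).card

/-- The edge set `{e_1, …, e_m}` of `G_{n,m}` in the random graph process `σ`. -/
def procEdges {n : ℕ} (σ : Ord n) (m : ℕ) : Finset (Sym2 (Fin n)) :=
  (Finset.univ.filter (fun i : Fin (numEdges n) => (i : ℕ) < m)).image (fun i => (σ i).1)

/-- The hitting time `τ_k` for minimum degree at least `k`. -/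
noncomputable def tau {n : ℕ} (k : ℕ) (σ : Ord n) : ℕ :=
  sInf {m | ∀ v : Fin n, k ≤ deg (procEdges σ m) v}

open scoped Classical in
/-- The probability of an event under the uniformly random edge ordering. -/
noncomputable def Pr {n : ℕ} (p : Ord n → Prop) : ℝ :=
  ((Finset.univ : Finset (Ord n)).filter p).card / (Fintype.card (Ord n) : ℝ)

/-- A deterministic online strategy: given the sequence of edges revealed so far
(the last entry being the edge just revealed), decide whether to purchase it. -/
abbrev Strategy (n : ℕ) := List (Sym2 (Fin n)) → Bool

/-- The list of the first `i` revealed edges `e_1, …, e_i`. -/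
def prefixList {n : ℕ} (σ : Ord n) (i : ℕ) : List (Sym2 (Fin n)) :=
  (List.range i).filterMap (fun j => if h : j < numEdges n then some (σ ⟨j, h⟩).1 else none)

/-- `buy st σ i` is the edge set of Builder's graph `B_i`: the edges purchased by the
strategy `st` among `e_1, …, e_i`. -/
def buy {n : ℕ} (st : Strategy n) (σ : Ord n) : ℕ → Finset (Sym2 (Fin n))
  | 0 => ∅
  | i + 1 =>
    if h : i < numEdges n then
      if st (prefixList σ (i + 1)) then insert (σ ⟨i, h⟩).1 (buy st σ i)
      else buy st σ i
    else buy st σ i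

end RGP

namespace RGP

open scoped Classical in
/-- The `k`-th nearest neighbour graph `O_k`: the set of edges `e_i` which are among the
first `k` edges of the random graph process incident to at least one of their endpoints. -/
noncomputable def nearestNbr {n : ℕ} (k : ℕ) (σ : Ord n) : Finset (Sym2 (Fin n)) :=
  ((Finset.univ : Finset (Fin (numEdges n))).filter
    (fun i => ∃ v ∈ (σ i).1, deg (procEdges σ ((i : ℕ) + 1)) v ≤ k)).image (fun i => (σ i).1)

/-- The constant `o_k = k/2 + (1/4)·Σ_{i=0}^{k−1} binom(2i,i)·2^{−2i}`. -/
noncomputable def oConst (k : ℕ) : ℝ :=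
  (k : ℝ) / 2 + (1 / 4) * ∑ i ∈ Finset.range k, ((2 * i).choose i : ℝ) * (2 : ℝ) ^ (-(2 * i : ℤ))

/-! Counting the first `k` edges at every vertex shows `|O_k| + |M| = k n`, where `M` is the set of
edges which are among the first `k` at both endpoints. An edge `uv` lies in `M` when fewer than `k`
edges at `u` and fewer than `k` edges at `v` precede it; these edges and `uv` itself are in
uniformly random order, so the probability is an explicit sum of ratios of binomial coefficients,
asymptotic to `2 (k - o_k) / n`. If only the edges leaving the four endpoints of two
disjoint edges are taken into account, the two events become independent and only grow. This bounds
`E |M| ^ 2`, so `|M| / n` converges to `k - o_k` in mean square; Chebyshev's inequality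
concludes. -/

open scoped BigOperators Topology

section Predecessors

variable {α β : Type*} [LinearOrder β]

/-- The elements of `S` which the position function `g` places strictly before `a`. -/
def predecessors (g : α → β) (S : Finset α) (a : α) : Finset α := {x ∈ S | g x < g a}

lemma mem_predecessors {g : α → β} {S : Finset α} {a x : α} :
    x ∈ predecessors g S a ↔ x ∈ S ∧ g x < g a := by
  simp [predecessors]

lemma predecessors_subset (g : α → β) (S : Finset α) (a : α) : predecessors g S a ⊆ S :=
  filter_subset _ _

lemma predecessors_mono (g : α → β) {S T : Finset α} (hST : S ⊆ T) (a : α) :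
    predecessors g S a ⊆ predecessors g T a :=
  filter_subset_filter _ hST

lemma predecessors_union [DecidableEq α] (g : α → β) (S T : Finset α) (a : α) :
    predecessors g (S ∪ T) a = predecessors g S a ∪ predecessors g T a :=
  filter_union ..

lemma predecessors_insert_self [DecidableEq α] (g : α → β) (S : Finset α) (a : α) :
    predecessors g (insert a S) a = predecessors g S a := by
  simp [predecessors, filter_insert]

lemma predecessors_subset_erase [DecidableEq α] (g : α → β) (S : Finset α) (a : α) :
    predecessors g S a ⊆ S.erase a := fun x hx => by
  rw [mem_predecessors] at hx
  exact mem_erase.2 ⟨fun h => hx.2.ne (congrArg g h), hx.1⟩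

lemma predecessors_congr {g g' : α → β} {S : Finset α} {a : α}
    (hS : ∀ x ∈ S, g x = g' x) (ha : g a = g' a) :
    predecessors g S a = predecessors g' S a :=
  filter_congr fun x hx => by rw [hS x hx, ha]

lemma dependsOn_card_predecessors_lt_and_lt [DecidableEq α] (A B : Finset α) (a : α) (k : ℕ) :
    DependsOn (fun g : α → β => #(predecessors g A a) < k ∧ #(predecessors g B a) < k)
      ((insert a (A ∪ B) : Finset α) : Set α) := fun g g' h => by
  simp only [mem_coe, mem_insert, mem_union] at h
  dsimp only
  rw [predecessors_congr (fun x hx => h x (.inr (.inl hx))) (h a (.inl rfl)),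
    predecessors_congr (fun x hx => h x (.inr (.inr hx))) (h a (.inl rfl))]

lemma predecessors_comp_symm (g : α → β) {S : Finset α} {π : Equiv.Perm α}
    (hπ : S.map π.toEmbedding = S) (a : α) :
    predecessors (g ∘ π.symm) S (π a) = (predecessors g S a).map π.toEmbedding := by
  conv_lhs => rw [← hπ]
  simp [predecessors, filter_map]

lemma predecessors_insert_union_eq_iff [DecidableEq α] {g : α → β} {A B I J : Finset α} {a : α}
    (hAB : Disjoint A B) (hI : I ⊆ A) (hJ : J ⊆ B) :
    predecessors g (insert a (A ∪ B)) a = I ∪ J ↔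
      predecessors g A a = I ∧ predecessors g B a = J := by
  rw [predecessors_insert_self, predecessors_union]
  refine ⟨fun h => ⟨?_, ?_⟩, fun ⟨hA, hB⟩ => by rw [hA, hB]⟩
  all_goals
    ext x
    have hx := Finset.ext_iff.1 h x
    have hdisj : x ∈ A → x ∉ B := (disjoint_left.1 hAB ·)
    have hIx := @hI x
    have hJx := @hJ x
    simp only [mem_union, mem_predecessors] at hx ⊢
    tauto

lemma card_predecessors_lt_card_predecessors {g : α → β} {S : Finset α} {a b : α} (ha : a ∈ S)
    (hab : g a < g b) : #(predecessors g S a) < #(predecessors g S b) := by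
  refine card_lt_card (ssubset_iff_of_subset ?_ |>.2 ⟨a, ?_, ?_⟩)
  · exact fun x hx => mem_predecessors.2
      ⟨(mem_predecessors.1 hx).1, (mem_predecessors.1 hx).2.trans hab⟩
  · exact mem_predecessors.2 ⟨ha, hab⟩
  · simp [mem_predecessors]

lemma injOn_card_predecessors {g : α → β} {S : Finset α} (hg : Set.InjOn g S) :
    Set.InjOn (fun a => #(predecessors g S a)) S := fun a ha b hb hab => by
  rcases lt_trichotomy (g a) (g b) with h | h | h
  · exact absurd hab (card_predecessors_lt_card_predecessors ha h).ne
  · exact hg ha hb h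
  · exact absurd hab (card_predecessors_lt_card_predecessors hb h).ne'

lemma image_card_predecessors {g : α → β} {S : Finset α} (hg : Set.InjOn g S) :
    S.image (fun a => #(predecessors g S a)) = range #S := by
  classical
  refine eq_of_subset_of_card_le (image_subset_iff.2 fun a ha => ?_) ?_
  · rw [mem_range, ← card_erase_add_one ha, Nat.lt_succ_iff]
    exact card_le_card (predecessors_subset_erase g S a)
  · rw [card_image_of_injOn (injOn_card_predecessors hg), card_range]

lemma card_filter_card_predecessors {g : α → β} {S : Finset α} (hg : Set.InjOn g S)
    (p : ℕ → Prop) [DecidablePred p] :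
    #{a ∈ S | p #(predecessors g S a)} = #{i ∈ range #S | p i} := by
  rw [← image_card_predecessors hg, filter_image, card_image_of_injOn]
  exact (injOn_card_predecessors hg).mono (coe_subset.2 (filter_subset _ _))

lemma card_filter_card_predecessors_lt {g : α → β} {S : Finset α} (hg : Set.InjOn g S) (k : ℕ) :
    #{a ∈ S | #(predecessors g S a) < k} = min k #S := by
  rw [card_filter_card_predecessors hg (· < k), ← card_range (min k #S)]
  congr 1
  grind

lemma card_filter_card_predecessors_eq {g : α → β} {S : Finset α} (hg : Set.InjOn g S) {w : ℕ}
    (hw : w < #S) : #{a ∈ S | #(predecessors g S a) = w} = 1 := by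
  rw [card_filter_card_predecessors hg (· = w), filter_eq', if_pos (mem_range.2 hw),
    card_singleton]

end Predecessors

section UniformOrder

lemma exists_perm_apply_eq_map_eq {α : Type*} {a a' : α} {W W' : Finset α}
    (ha : a ∉ W) (ha' : a' ∉ W') (hW : #W = #W') :
    ∃ π : Equiv.Perm α, π a = a' ∧ W.map π.toEmbedding = W' := by
  classical
  let e := equivOfCardEq hW
  let ρ : Equiv.Perm α := e.extendSubtype
  refine ⟨ρ.trans (Equiv.swap (ρ a) a'), by simp, eq_of_subset_of_card_le ?_ (by simp [hW])⟩
  intro y hy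
  obtain ⟨x, hx, rfl⟩ := mem_map.1 hy
  have hρx : ρ x ∈ W' := e.extendSubtype_mem x hx
  have hρa : ρ a ∉ W' := e.extendSubtype_not_mem a ha
  rwa [Equiv.coe_toEmbedding, Equiv.trans_apply,
    Equiv.swap_apply_of_ne_of_ne (ne_of_mem_of_not_mem hρx hρa) (ne_of_mem_of_not_mem hρx ha')]

lemma exists_perm_apply_eq_map_eq_of_subset {α : Type*} {S : Finset α} {a a' : α}
    {W W' : Finset α} (haS : a ∈ S) (haS' : a' ∈ S) (hWS : W ⊆ S) (hWS' : W' ⊆ S)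
    (ha : a ∉ W) (ha' : a' ∉ W') (hW : #W = #W') :
    ∃ π : Equiv.Perm α, (∀ x ∉ S, π x = x) ∧ π a = a' ∧ W.map π.toEmbedding = W' := by
  classical
  obtain ⟨ρ, hρa, hρW⟩ := exists_perm_apply_eq_map_eq (a := (⟨a, haS⟩ : S)) (a' := ⟨a', haS'⟩)
    (W := W.subtype (· ∈ S)) (W' := W'.subtype (· ∈ S)) (by simpa) (by simpa)
    (by rw [card_subtype, card_subtype, filter_true_of_mem hWS, filter_true_of_mem hWS', hW])
  refine ⟨Equiv.Perm.ofSubtype ρ, fun x => Equiv.Perm.ofSubtype_apply_of_not_mem ρ, ?_,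
    eq_of_subset_of_card_le ?_ (by simp [hW])⟩
  · rw [Equiv.Perm.ofSubtype_apply_of_mem ρ haS, hρa]
  · intro y hy
    obtain ⟨x, hx, rfl⟩ := mem_map.1 hy
    rw [Equiv.coe_toEmbedding, Equiv.Perm.ofSubtype_apply_of_mem ρ (hWS hx),
      ← mem_subtype (p := (· ∈ S)), ← hρW]
    exact mem_map_of_mem _ (mem_subtype.2 hx)

variable {ι α : Type*} [Fintype ι] [LinearOrder ι] [Fintype α] [DecidableEq α]

lemma card_filter_predecessors_eq_perm {S : Finset α} {π : Equiv.Perm α} (hπ : ∀ x ∉ S, π x = x)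
    (a : α) (W : Finset α) {Q : (α → ι) → Prop} [DecidablePred Q]
    (hQ : DependsOn Q (S : Set α)ᶜ) :
    #{σ : ι ≃ α | predecessors σ.symm S (π a) = W.map π.toEmbedding ∧ Q σ.symm} =
      #{σ : ι ≃ α | predecessors σ.symm S a = W ∧ Q σ.symm} := by
  have hS : S.map π.toEmbedding = S := map_perm fun x hx => by_contra fun h => hx (hπ x h)
  refine (card_equiv (Equiv.equivCongr (Equiv.refl ι) π) fun σ => ?_).symm
  have hQσ : Q σ.symm = Q (σ.symm ∘ π.symm) := hQ fun x hx => by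
    rw [Function.comp_apply, π.symm_apply_eq.2 (hπ x hx).symm]
  have hcoe : ⇑(Equiv.equivCongr (Equiv.refl ι) π σ).symm = σ.symm ∘ π.symm := rfl
  simp only [mem_filter_univ, hcoe, predecessors_comp_symm _ hS, Finset.map_inj, hQσ]

lemma card_filter_and_card_predecessors_eq (S : Finset α) (a : α) (w : ℕ) (P : ι ≃ α → Prop)
    [DecidablePred P] :
    #{σ : ι ≃ α | P σ ∧ #(predecessors σ.symm S a) = w} =
      ∑ W ∈ powersetCard w (S.erase a), #{σ : ι ≃ α | predecessors σ.symm S a = W ∧ P σ} := by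
  rw [card_eq_sum_card_fiberwise (f := fun σ : ι ≃ α => predecessors σ.symm S a)
    (t := powersetCard w (S.erase a)) fun σ hσ => ?_]
  · refine sum_congr rfl fun W hW => congrArg card ?_
    rw [filter_filter]
    refine filter_congr fun σ _ => ?_
    have hWcard := (mem_powersetCard.1 hW).2
    grind
  · exact mem_powersetCard.2 ⟨predecessors_subset_erase _ _ _, ((mem_filter_univ _).1 hσ).2⟩

lemma sum_card_filter_card_predecessors_eq {S : Finset α} {w : ℕ} (hw : w < #S)
    (P : ι ≃ α → Prop) [DecidablePred P] :
    ∑ a ∈ S, #{σ : ι ≃ α | P σ ∧ #(predecessors σ.symm S a) = w} = #{σ : ι ≃ α | P σ} := by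
  calc ∑ a ∈ S, #{σ : ι ≃ α | P σ ∧ #(predecessors σ.symm S a) = w}
      = ∑ σ : ι ≃ α with P σ, #{a ∈ S | #(predecessors σ.symm S a) = w} := by
        simp only [← filter_filter]
        exact sum_card_bipartiteAbove_eq_sum_card_bipartiteBelow _
    _ = #{σ : ι ≃ α | P σ} := by
        rw [sum_congr rfl fun (σ : ι ≃ α) _ =>
          card_filter_card_predecessors_eq σ.symm.injective.injOn hw, ← card_eq_sum_ones]

/-- Every order has exactly one point of `S` with `#W` predecessors in `S`, and by symmetry all
choices of that point and of its set of predecessors are equally likely. -/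
lemma card_filter_predecessors_eq {S : Finset α} {a : α} (ha : a ∈ S) {W : Finset α}
    (hW : W ⊆ S.erase a) {Q : (α → ι) → Prop} [DecidablePred Q]
    (hQ : DependsOn Q (S : Set α)ᶜ) :
    #S * (#S - 1).choose #W * #{σ : ι ≃ α | predecessors σ.symm S a = W ∧ Q σ.symm} =
      #{σ : ι ≃ α | Q σ.symm} := by
  have hexch : ∀ b ∈ S, ∀ V ∈ powersetCard #W (S.erase b),
      #{σ : ι ≃ α | predecessors σ.symm S b = V ∧ Q σ.symm} =
        #{σ : ι ≃ α | predecessors σ.symm S a = W ∧ Q σ.symm} := by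
    intro b hb V hV
    obtain ⟨hVS, hVW⟩ := mem_powersetCard.1 hV
    obtain ⟨π, hπS, rfl, rfl⟩ := exists_perm_apply_eq_map_eq_of_subset ha hb
      (hW.trans (erase_subset _ _)) (hVS.trans (erase_subset _ _))
      (fun h => notMem_erase _ _ (hW h)) (fun h => notMem_erase _ _ (hVS h)) hVW.symm
    exact card_filter_predecessors_eq_perm hπS a W hQ
  have hlt : #W < #S := (card_le_card hW).trans_lt (card_erase_lt_of_mem ha)
  rw [← sum_card_filter_card_predecessors_eq hlt fun σ => Q σ.symm]
  simp only [card_filter_and_card_predecessors_eq]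
  rw [sum_congr rfl fun b hb => sum_congr rfl (hexch b hb)]
  simp only [sum_const, card_powersetCard, smul_eq_mul]
  rw [sum_congr rfl fun b hb => by rw [card_erase_of_mem hb], sum_const, smul_eq_mul, mul_assoc]

lemma card_filter_predecessors_eq_and_eq {A B I J : Finset α} {a : α} (hAB : Disjoint A B)
    (haA : a ∉ A) (haB : a ∉ B) (hI : I ⊆ A) (hJ : J ⊆ B) {Q : (α → ι) → Prop}
    [DecidablePred Q] (hQ : DependsOn Q ((insert a (A ∪ B) : Finset α) : Set α)ᶜ) :
    (#{σ : ι ≃ α | (predecessors σ.symm A a = I ∧ predecessors σ.symm B a = J) ∧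
        Q σ.symm} : ℝ) =
      #{σ : ι ≃ α | Q σ.symm} / ((#A + #B + 1) * (#A + #B).choose (#I + #J)) := by
  have haAB : a ∉ A ∪ B := by simp [haA, haB]
  have hcard : #(insert a (A ∪ B)) = #A + #B + 1 := by
    rw [card_insert_of_notMem haAB, card_union_of_disjoint hAB]
  have hIJ := card_filter_predecessors_eq (W := I ∪ J) (mem_insert_self a (A ∪ B))
    (by rw [erase_insert haAB]; exact union_subset_union hI hJ) hQ
  simp only [predecessors_insert_union_eq_iff hAB hI hJ, hcard,
    card_union_of_disjoint (hAB.mono hI hJ), Nat.add_sub_cancel] at hIJ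
  have hpos : 0 < (#A + #B).choose (#I + #J) :=
    Nat.choose_pos (add_le_add (card_le_card hI) (card_le_card hJ))
  rw [eq_div_iff (by positivity), mul_comm]
  exact_mod_cast hIJ

lemma card_filter_card_predecessors_eq_and_eq {A B : Finset α} {a : α} (hAB : Disjoint A B)
    (haA : a ∉ A) (haB : a ∉ B) {Q : (α → ι) → Prop} [DecidablePred Q]
    (hQ : DependsOn Q ((insert a (A ∪ B) : Finset α) : Set α)ᶜ) (i j : ℕ) :
    (#{σ : ι ≃ α | (#(predecessors σ.symm A a) = i ∧ #(predecessors σ.symm B a) = j) ∧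
        Q σ.symm} : ℝ) =
      (#A).choose i * (#B).choose j / ((#A + #B + 1) * (#A + #B).choose (i + j)) *
        #{σ : ι ≃ α | Q σ.symm} := by
  have hfiber : ∀ p ∈ powersetCard i A ×ˢ powersetCard j B,
      (#{σ ∈ ({σ : ι ≃ α | (#(predecessors σ.symm A a) = i ∧ #(predecessors σ.symm B a) = j) ∧
          Q σ.symm} : Finset _) | (predecessors σ.symm A a, predecessors σ.symm B a) = p} : ℝ) =
        #{σ : ι ≃ α | Q σ.symm} / ((#A + #B + 1) * (#A + #B).choose (i + j)) := by
    rintro ⟨I, J⟩ hIJ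
    obtain ⟨⟨hI, rfl⟩, hJ, rfl⟩ := by simpa only [mem_product, mem_powersetCard] using hIJ
    rw [← card_filter_predecessors_eq_and_eq hAB haA haB hI hJ hQ, filter_filter]
    congr 2
    grind
  rw [card_eq_sum_card_fiberwise
    (f := fun σ : ι ≃ α => (predecessors σ.symm A a, predecessors σ.symm B a))
    (t := powersetCard i A ×ˢ powersetCard j B) fun σ hσ => ?_, Nat.cast_sum,
    sum_congr rfl hfiber, sum_const, card_product, card_powersetCard, card_powersetCard,
    nsmul_eq_mul]
  · push_cast
    ring
  · obtain ⟨hi, hj⟩ := (mem_filter_univ _ |>.1 hσ).1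
    exact mem_product.2 ⟨mem_powersetCard.2 ⟨predecessors_subset _ _ _, hi⟩,
      mem_powersetCard.2 ⟨predecessors_subset _ _ _, hj⟩⟩

/-- The probability that, in a uniformly random order of `a + b + 1` points, a given point is
preceded by fewer than `k` of `a` given other points and by fewer than `k` of the `b` remaining
ones. -/
noncomputable def earlyProb (k a b : ℕ) : ℝ :=
  ∑ i ∈ range k, ∑ j ∈ range k,
    a.choose i * b.choose j / ((a + b + 1) * (a + b).choose (i + j))

lemma card_filter_card_predecessors_lt_and_lt {A B : Finset α} {a : α} (hAB : Disjoint A B)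
    (haA : a ∉ A) (haB : a ∉ B) {Q : (α → ι) → Prop} [DecidablePred Q]
    (hQ : DependsOn Q ((insert a (A ∪ B) : Finset α) : Set α)ᶜ) (k : ℕ) :
    (#{σ : ι ≃ α | (#(predecessors σ.symm A a) < k ∧ #(predecessors σ.symm B a) < k) ∧
        Q σ.symm} : ℝ) = earlyProb k #A #B * #{σ : ι ≃ α | Q σ.symm} := by
  rw [card_eq_sum_card_fiberwise
    (f := fun σ : ι ≃ α => (#(predecessors σ.symm A a), #(predecessors σ.symm B a)))
    (t := range k ×ˢ range k) fun σ hσ => ?_, sum_product, earlyProb, sum_mul, Nat.cast_sum]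
  · refine sum_congr rfl fun i hi => ?_
    rw [sum_mul, Nat.cast_sum]
    refine sum_congr rfl fun j hj => ?_
    rw [← card_filter_card_predecessors_eq_and_eq hAB haA haB hQ, filter_filter]
    congr 2
    grind
  · obtain ⟨hi, hj⟩ := (mem_filter_univ _ |>.1 hσ).1
    exact mem_product.2 ⟨mem_range.2 hi, mem_range.2 hj⟩

end UniformOrder

section Limit

lemma choose_mul_half_pow_succ_succ (k i : ℕ) :
    ((k + 1 + (i + 1)).choose (i + 1) : ℝ) * (1 / 2) ^ (i + 1) =
      (k + (i + 1)).choose (i + 1) * (1 / 2) ^ (i + 1) +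
        1 / 2 * ((k + 1 + i).choose i * (1 / 2) ^ i) := by
  rw [show k + 1 + (i + 1) = k + 1 + i + 1 by ring, Nat.choose_succ_succ,
    show k + (i + 1) = k + 1 + i by ring]
  push_cast
  ring

lemma sum_range_choose_mul_half_pow (k : ℕ) :
    ∑ i ∈ range (k + 1), ((k + i).choose i : ℝ) * (1 / 2) ^ i = 2 ^ k := by
  induction k with
  | zero => simp
  | succ k ih =>
    have hpascal : ∑ i ∈ range (k + 2), ((k + 1 + i).choose i : ℝ) * (1 / 2) ^ i =
        ∑ i ∈ range (k + 2), ((k + i).choose i : ℝ) * (1 / 2) ^ i +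
          1 / 2 * ∑ i ∈ range (k + 1), ((k + 1 + i).choose i : ℝ) * (1 / 2) ^ i := by
      rw [sum_range_succ' _ (k + 1), sum_range_succ' _ (k + 1), mul_sum,
        sum_congr rfl fun i _ => choose_mul_half_pow_succ_succ k i, sum_add_distrib]
      simp only [add_zero, Nat.choose_zero_right]
      ring
    have hmiddle : ((k + 1 + (k + 1)).choose (k + 1) : ℝ) = 2 * (k + (k + 1)).choose (k + 1) := by
      rw [show k + 1 + (k + 1) = k + (k + 1) + 1 by ring, Nat.choose_succ_succ,
        Nat.choose_symm_of_eq_add (show k + (k + 1) = k + (k + 1) from rfl)]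
      push_cast
      ring
    rw [sum_range_succ _ (k + 1), sum_range_succ _ (k + 1), ih, hmiddle] at hpascal
    rw [sum_range_succ, hmiddle, pow_succ (2 : ℝ)]
    linarith

/-- The double sum `∑_{i,j<k} C(i+j, i) 2^{-(i+j)}`; the probability that each endpoint of a given
edge of `K_n` sees fewer than `k` edges before it is asymptotically `earlySum k / (2n)`. -/
noncomputable def earlySum (k : ℕ) : ℝ :=
  ∑ i ∈ range k, ∑ j ∈ range k, (i + j).choose i * (1 / 2 : ℝ) ^ (i + j)

lemma earlySum_succ (k : ℕ) :
    earlySum (k + 1) = earlySum k + 2 - (2 * k).choose k * (2 : ℝ) ^ (-(2 * k : ℤ)) := by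
  have hrow : ∑ j ∈ range k, (k + j).choose k * (1 / 2 : ℝ) ^ (k + j) =
      1 - (2 * k).choose k * (1 / 2) ^ (2 * k) := by
    have h := sum_range_choose_mul_half_pow k
    rw [sum_range_succ] at h
    calc ∑ j ∈ range k, (k + j).choose k * (1 / 2 : ℝ) ^ (k + j)
        = (1 / 2) ^ k * ∑ j ∈ range k, (k + j).choose j * (1 / 2 : ℝ) ^ j := by
          rw [mul_sum]
          refine sum_congr rfl fun j _ => ?_
          rw [Nat.choose_symm_add, pow_add]
          ring
      _ = (1 / 2 * 2) ^ k - (2 * k).choose k * (1 / 2) ^ (2 * k) := by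
          rw [eq_sub_of_add_eq h, mul_pow, two_mul, pow_add]
          ring
      _ = 1 - (2 * k).choose k * (1 / 2) ^ (2 * k) := by norm_num
  have hcolumn : ∑ i ∈ range k, (i + k).choose i * (1 / 2 : ℝ) ^ (i + k) =
      ∑ j ∈ range k, (k + j).choose k * (1 / 2 : ℝ) ^ (k + j) :=
    sum_congr rfl fun i _ => by rw [Nat.choose_symm_add, add_comm]
  have hpow : (2 : ℝ) ^ (-(2 * k : ℤ)) = (1 / 2) ^ (2 * k) := by
    rw [zpow_neg, one_div, inv_pow]
    norm_cast
  simp only [earlySum, sum_range_succ, sum_add_distrib]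
  rw [hcolumn, hrow, hpow, ← two_mul]
  ring

lemma earlySum_div_four (k : ℕ) : earlySum k / 4 = k - oConst k := by
  have h : earlySum k =
      2 * k - ∑ i ∈ range k, ((2 * i).choose i : ℝ) * (2 : ℝ) ^ (-(2 * i : ℤ)) := by
    induction k with
    | zero => simp [earlySum]
    | succ k ih =>
      rw [earlySum_succ, ih, sum_range_succ]
      push_cast
      ring
  rw [h, oConst]
  ring

lemma tendsto_choose_div_pow (i : ℕ) :
    Tendsto (fun m : ℕ => (m.choose i : ℝ) / m ^ i) atTop (𝓝 (1 / i.factorial)) := by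
  have h := ProbabilityTheory.tendsto_choose_mul_pow_atTop (p := fun m : ℕ => (m : ℝ)⁻¹) (r := 1) i
    (tendsto_const_nhds.congr' ?_)
  · simpa [div_eq_mul_inv] using h
  · filter_upwards [eventually_ne_atTop 0] with m hm
    field_simp

lemma tendsto_mul_choose_mul_choose_div (i j : ℕ) :
    Tendsto (fun m : ℕ => m * (m.choose i * m.choose j /
      ((m + m + 1) * (m + m).choose (i + j)) : ℝ)) atTop
      (𝓝 ((i + j).choose i * (1 / 2) ^ (i + j) / 2)) := by
  have hdouble : Tendsto (fun m : ℕ => m + m) atTop atTop :=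
    tendsto_atTop_mono (fun m => Nat.le_add_left m m) tendsto_id
  have hhalf : Tendsto (fun m : ℕ => (m : ℝ) / (m + m + 1)) atTop (𝓝 (1 / 2)) := by
    have h := (tendsto_natCast_div_add_atTop (1 / 2 : ℝ)).div_const 2
    refine h.congr fun m => ?_
    field_simp
    ring
  have hlim := ((hhalf.mul ((tendsto_choose_div_pow i).mul (tendsto_choose_div_pow j))).div
    ((tendsto_choose_div_pow (i + j)).comp hdouble) (by positivity)).mul_const
      ((1 / 2 : ℝ) ^ (i + j))
  convert hlim.congr' ?_ using 2
  · rw [Nat.choose_symm_add, ← Nat.add_choose_mul_factorial_mul_factorial i j]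
    push_cast
    field_simp
  · filter_upwards [eventually_ne_atTop 0] with m hm
    simp only [Pi.div_apply, Function.comp_apply, ← two_mul, pow_add, div_pow, one_pow]
    push_cast
    rw [mul_pow, mul_pow]
    field_simp

lemma tendsto_mul_earlyProb (k : ℕ) :
    Tendsto (fun m : ℕ => m * earlyProb k m m) atTop (𝓝 (earlySum k / 2)) := by
  simp only [earlyProb, earlySum, mul_sum, sum_div]
  exact tendsto_finsetSum _ fun i _ => tendsto_finsetSum _ fun j _ =>
    tendsto_mul_choose_mul_choose_div i j

lemma cast_numEdges (n : ℕ) : (numEdges n : ℝ) = n * (n - 1) / 2 := by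
  rw [numEdges, ← Nat.choose_two_right, Nat.cast_choose_two]

lemma tendsto_numEdges_mul_earlyProb_div (k c : ℕ) :
    Tendsto (fun n : ℕ => numEdges n * earlyProb k (n - c) (n - c) / n) atTop
      (𝓝 (k - oConst k)) := by
  rw [← tendsto_add_atTop_iff_nat c, ← earlySum_div_four]
  have hratio : Tendsto (fun m : ℕ => 1 + ((c : ℝ) - 1) / m) atTop (𝓝 (1 + 0)) :=
    tendsto_const_nhds.add (tendsto_const_div_atTop_nhds_zero_nat _)
  have hlim := (hratio.mul (tendsto_mul_earlyProb k)).div_const 2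
  rw [add_zero, one_mul, div_div, show (2 : ℝ) * 2 = 4 by norm_num] at hlim
  refine hlim.congr' ?_
  filter_upwards [eventually_ne_atTop 0] with m hm
  rw [Nat.add_sub_cancel, cast_numEdges]
  have hmc : (m + c : ℝ) ≠ 0 := by positivity
  push_cast
  field_simp
  ring

end Limit

section Edges

variable {n : ℕ}

/-- The edges of `K_n` incident to `v`. -/
def incidentEdges (v : Fin n) : Finset (EdgeType n) := {e | v ∈ e.1}

/-- The edges of `K_n` joining `v` to a vertex outside `F`. -/
def edgesToCompl (v : Fin n) (F : Finset (Fin n)) : Finset (EdgeType n) :=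
  {e | ∃ w ∉ F, e.1 = s(v, w)}

@[simp]
lemma mem_incidentEdges {v : Fin n} {e : EdgeType n} : e ∈ incidentEdges v ↔ v ∈ e.1 := by
  simp [incidentEdges]

lemma mem_edgesToCompl {v : Fin n} {F : Finset (Fin n)} {e : EdgeType n} :
    e ∈ edgesToCompl v F ↔ ∃ w ∉ F, e.1 = s(v, w) := by
  simp [edgesToCompl]

lemma exists_val_eq (e : EdgeType n) : ∃ u v, e.1 = s(u, v) := by
  obtain ⟨⟨u, v⟩, _⟩ := e
  exact ⟨u, v, rfl⟩

lemma edgesToCompl_subset_incidentEdges (v : Fin n) (F : Finset (Fin n)) :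
    edgesToCompl v F ⊆ incidentEdges v := fun e he => by
  obtain ⟨w, -, hw⟩ := mem_edgesToCompl.1 he
  simp [hw]

lemma ne_of_val_eq {u v : Fin n} {e : EdgeType n} (he : e.1 = s(u, v)) : u ≠ v := fun huv =>
  e.2 (by rw [he, huv]; rfl)

lemma incidentEdges_eq_edgesToCompl (v : Fin n) : incidentEdges v = edgesToCompl v {v} := by
  ext e
  rw [mem_incidentEdges, mem_edgesToCompl, Sym2.mem_iff_exists]
  exact ⟨fun ⟨w, hw⟩ => ⟨w, by simpa using (ne_of_val_eq hw).symm, hw⟩, fun ⟨w, _, hw⟩ => ⟨w, hw⟩⟩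

lemma incidentEdges_eq_insert {u v : Fin n} {e : EdgeType n} (he : e.1 = s(u, v)) :
    incidentEdges u = insert e (edgesToCompl u {u, v}) := by
  ext f
  rw [mem_incidentEdges, mem_insert, mem_edgesToCompl, Sym2.mem_iff_exists]
  constructor
  · rintro ⟨w, hw⟩
    by_cases hwv : w = v
    · exact .inl (Subtype.ext (by rw [hw, he, hwv]))
    · exact .inr ⟨w, by simp [(ne_of_val_eq hw).symm, hwv], hw⟩
  · rintro (rfl | ⟨w, -, hw⟩)
    exacts [⟨v, he⟩, ⟨w, hw⟩]

lemma card_edgesToCompl {v : Fin n} {F : Finset (Fin n)} (hv : v ∈ F) :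
    #(edgesToCompl v F) = n - #F := by
  have himage : (edgesToCompl v F).map (Function.Embedding.subtype _) = Fᶜ.image (s(v, ·)) := by
    ext e
    simp only [Finset.mem_map, mem_edgesToCompl, mem_image, mem_compl]
    constructor
    · rintro ⟨f, ⟨w, hw, hf⟩, rfl⟩
      exact ⟨w, hw, hf.symm⟩
    · rintro ⟨w, hw, rfl⟩
      exact ⟨⟨s(v, w), ne_of_mem_of_not_mem hv hw⟩, ⟨w, hw, rfl⟩, rfl⟩
  rw [← card_map, himage, card_image_of_injective _ fun w w' h => Sym2.congr_right.1 h,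
    card_compl, Fintype.card_fin]

lemma card_incidentEdges (v : Fin n) : #(incidentEdges v) = n - 1 := by
  rw [incidentEdges_eq_edgesToCompl, card_edgesToCompl (mem_singleton_self v), card_singleton]

lemma card_edgeType (n : ℕ) : Fintype.card (EdgeType n) = numEdges n := by
  rw [Sym2.card_subtype_not_diag, Fintype.card_fin, Nat.choose_two_right, numEdges]

lemma disjoint_edgesToCompl {u v : Fin n} {F : Finset (Fin n)} (hu : u ∈ F) (huv : u ≠ v) :
    Disjoint (edgesToCompl u F) (edgesToCompl v F) := by
  refine disjoint_left.2 fun e heu hev => ?_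
  obtain ⟨w, -, hw⟩ := mem_edgesToCompl.1 heu
  obtain ⟨w', hw', he⟩ := mem_edgesToCompl.1 hev
  rw [hw, Sym2.eq_iff] at he
  grind

lemma notMem_edgesToCompl {v : Fin n} {F : Finset (Fin n)} {e : EdgeType n}
    (he : ∀ w ∈ e.1, w ∈ F) : e ∉ edgesToCompl v F := fun h => by
  obtain ⟨w, hw, hvw⟩ := mem_edgesToCompl.1 h
  exact hw (he w (by simp [hvw]))

end Edges

section NearestNeighbours

variable {n : ℕ} {ι : Type*} [LinearOrder ι]

/-- The first `k` edges at `v` when the edges of `K_n` are ordered by the position function `g`. -/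
def firstEdges (k : ℕ) (g : EdgeType n → ι) (v : Fin n) : Finset (EdgeType n) :=
  {e ∈ incidentEdges v | #(predecessors g (incidentEdges v) e) < k}

/-- The edges which are among the first `k` edges at both of their endpoints; these are the ones
counted twice when the first `k` edges are counted at every vertex. -/
def mutualNbr (k : ℕ) (g : EdgeType n → ι) : Finset (EdgeType n) :=
  {e | ∀ v ∈ e.1, e ∈ firstEdges k g v}

lemma mem_firstEdges {k : ℕ} {g : EdgeType n → ι} {v : Fin n} {e : EdgeType n} :
    e ∈ firstEdges k g v ↔ v ∈ e.1 ∧ #(predecessors g (incidentEdges v) e) < k := by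
  simp [firstEdges]

lemma mem_mutualNbr {k : ℕ} {g : EdgeType n → ι} {e : EdgeType n} :
    e ∈ mutualNbr k g ↔ ∀ v ∈ e.1, e ∈ firstEdges k g v := by
  simp [mutualNbr]

lemma card_firstEdges (k : ℕ) {g : EdgeType n → ι} (hg : g.Injective) (v : Fin n) :
    #(firstEdges k g v) = min k (n - 1) := by
  rw [firstEdges, card_filter_card_predecessors_lt hg.injOn, card_incidentEdges]

lemma procEdges_eq_map (σ : Ord n) (m : ℕ) :
    procEdges σ m =
      ({e | (σ.symm e : ℕ) < m} : Finset (EdgeType n)).map (Function.Embedding.subtype _) := by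
  ext x
  simp only [procEdges, mem_image, Finset.mem_map, mem_filter_univ]
  exact σ.exists_congr fun i => by simp

lemma deg_procEdges {σ : Ord n} {e : EdgeType n} {v : Fin n} (hv : v ∈ e.1) :
    deg (procEdges σ (σ.symm e + 1)) v =
      #(predecessors σ.symm (incidentEdges v) e) + 1 := by
  have he : e ∉ predecessors σ.symm (incidentEdges v) e := by simp [mem_predecessors]
  rw [← card_insert_of_notMem he, deg, procEdges_eq_map, filter_map, card_map, filter_filter]
  congr 1
  ext f
  have hle : (σ.symm f : ℕ) < σ.symm e + 1 ↔ f = e ∨ σ.symm f < σ.symm e := by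
    rw [Nat.lt_succ_iff, Fin.val_fin_le, le_iff_eq_or_lt, σ.symm.injective.eq_iff]
  grind [mem_predecessors, mem_incidentEdges, Function.Embedding.subtype_apply]

lemma nearestNbr_eq_map (k : ℕ) (σ : Ord n) :
    nearestNbr k σ =
      ({e | ∃ v, e ∈ firstEdges k σ.symm v} : Finset (EdgeType n)).map
        (Function.Embedding.subtype _) := by
  ext x
  simp only [nearestNbr, mem_image, Finset.mem_map, mem_filter_univ, mem_firstEdges]
  refine σ.exists_congr fun i => and_congr (exists_congr fun v => and_congr_right fun hv => ?_) .rfl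
  have hdeg := deg_procEdges (σ := σ) hv
  rw [σ.symm_apply_apply] at hdeg
  rw [hdeg, Nat.succ_le_iff]

lemma card_filter_mem_firstEdges (k : ℕ) (g : EdgeType n → ι) (e : EdgeType n) :
    #{v | e ∈ firstEdges k g v} =
      (if ∃ v, e ∈ firstEdges k g v then 1 else 0) + if e ∈ mutualNbr k g then 1 else 0 := by
  obtain ⟨u, v, he⟩ := exists_val_eq e
  have huv := ne_of_val_eq he
  have hsub : ∀ w, e ∈ firstEdges k g w → w = u ∨ w = v := fun w hw => by
    simpa [he] using (mem_firstEdges.1 hw).1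
  have hends : ({w | e ∈ firstEdges k g w} : Finset _) =
      {w ∈ ({u, v} : Finset (Fin n)) | e ∈ firstEdges k g w} := by
    ext w
    simpa using hsub w
  have hexists : (∃ w, e ∈ firstEdges k g w) ↔ e ∈ firstEdges k g u ∨ e ∈ firstEdges k g v := by
    grind
  have hforall : e ∈ mutualNbr k g ↔ e ∈ firstEdges k g u ∧ e ∈ firstEdges k g v := by
    simp [mem_mutualNbr, he]
  rw [hends, filter_insert, filter_singleton]
  simp only [hexists, hforall]
  by_cases hu : e ∈ firstEdges k g u <;> by_cases hv : e ∈ firstEdges k g v <;>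
    simp [hu, hv, huv]

lemma card_nearestNbr_add_card_mutualNbr {k : ℕ} (hk : k < n) (σ : Ord n) :
    #(nearestNbr k σ) + #(mutualNbr k σ.symm) = k * n := by
  calc #(nearestNbr k σ) + #(mutualNbr k σ.symm)
      = ∑ e : EdgeType n, #{v | e ∈ firstEdges k σ.symm v} := by
        rw [nearestNbr_eq_map, card_map, card_filter, ← filter_univ_mem (mutualNbr k σ.symm),
          card_filter, ← sum_add_distrib]
        exact sum_congr rfl fun e _ => (card_filter_mem_firstEdges k _ e).symm
    _ = ∑ v, #(firstEdges k σ.symm v) := by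
        simpa only [bipartiteAbove, bipartiteBelow, filter_univ_mem] using
          sum_card_bipartiteAbove_eq_sum_card_bipartiteBelow (s := univ) (t := univ)
            fun (e : EdgeType n) v => e ∈ firstEdges k σ.symm v
    _ = k * n := by
        simp [card_firstEdges k σ.symm.injective, Nat.le_sub_one_of_lt hk, mul_comm]

end NearestNeighbours

section MutualNeighbours

variable {n : ℕ}

lemma mem_mutualNbr_iff {ι : Type*} [LinearOrder ι] {k : ℕ} {g : EdgeType n → ι} {e : EdgeType n}
    {u v : Fin n} (he : e.1 = s(u, v)) :
    e ∈ mutualNbr k g ↔ #(predecessors g (edgesToCompl u {u, v}) e) < k ∧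
      #(predecessors g (edgesToCompl v {u, v}) e) < k := by
  have he' : e.1 = s(v, u) := he.trans Sym2.eq_swap
  simp only [mem_mutualNbr, mem_firstEdges, he, Sym2.mem_iff, forall_eq_or_imp, forall_eq, true_or,
    or_true, true_and, incidentEdges_eq_insert he, incidentEdges_eq_insert he',
    predecessors_insert_self, pair_comm v u]

lemma card_filter_card_predecessors_edgesToCompl_lt_and {e : EdgeType n} {u v : Fin n}
    (he : e.1 = s(u, v)) {F : Finset (Fin n)} (hu : u ∈ F) (hv : v ∈ F)
    {Q : (EdgeType n → Fin (numEdges n)) → Prop} [DecidablePred Q]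
    (hQ : DependsOn Q ((insert e (edgesToCompl u F ∪ edgesToCompl v F) : Finset _) : Set _)ᶜ)
    (k : ℕ) :
    (#{σ : Ord n | (#(predecessors σ.symm (edgesToCompl u F) e) < k ∧
        #(predecessors σ.symm (edgesToCompl v F) e) < k) ∧ Q σ.symm} : ℝ) =
      earlyProb k (n - #F) (n - #F) * #{σ : Ord n | Q σ.symm} := by
  have hmem : ∀ w ∈ e.1, w ∈ F := by simp [he, hu, hv]
  rw [card_filter_card_predecessors_lt_and_lt (disjoint_edgesToCompl hu (ne_of_val_eq he))
    (notMem_edgesToCompl hmem) (notMem_edgesToCompl hmem) hQ, card_edgesToCompl hu,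
    card_edgesToCompl hv]

lemma card_filter_card_predecessors_edgesToCompl_lt {e : EdgeType n} {u v : Fin n}
    (he : e.1 = s(u, v)) {F : Finset (Fin n)} (hu : u ∈ F) (hv : v ∈ F) (k : ℕ) :
    (#{σ : Ord n | #(predecessors σ.symm (edgesToCompl u F) e) < k ∧
        #(predecessors σ.symm (edgesToCompl v F) e) < k} : ℝ) =
      earlyProb k (n - #F) (n - #F) * Fintype.card (Ord n) := by
  simpa using card_filter_card_predecessors_edgesToCompl_lt_and he hu hv
    ((dependsOn_const True).mono (Set.empty_subset _)) k

lemma card_filter_mem_mutualNbr (k : ℕ) (e : EdgeType n) :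
    (#{σ : Ord n | e ∈ mutualNbr k σ.symm} : ℝ) =
      earlyProb k (n - 2) (n - 2) * Fintype.card (Ord n) := by
  obtain ⟨u, v, he⟩ := exists_val_eq e
  rw [← card_pair (ne_of_val_eq he), ← card_filter_card_predecessors_edgesToCompl_lt he
    (mem_insert_self u {v}) (mem_insert_of_mem (mem_singleton_self v))]
  simp only [mem_mutualNbr_iff he]

lemma card_predecessors_edgesToCompl_lt_of_mem_mutualNbr {ι : Type*} [LinearOrder ι] {k : ℕ}
    {g : EdgeType n → ι} {e : EdgeType n} (heg : e ∈ mutualNbr k g) {v : Fin n} (hv : v ∈ e.1)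
    (F : Finset (Fin n)) : #(predecessors g (edgesToCompl v F) e) < k :=
  (card_le_card (predecessors_mono g (edgesToCompl_subset_incidentEdges v F) e)).trans_lt
    (mem_firstEdges.1 (mem_mutualNbr.1 heg v hv)).2

lemma disjoint_insert_edgesToCompl_union {e f : EdgeType n} {u v x y : Fin n}
    (he : e.1 = s(u, v)) (hf : f.1 = s(x, y)) (hef : ∀ w ∈ e.1, w ∉ f.1) {F : Finset (Fin n)}
    (heF : ∀ w ∈ e.1, w ∈ F) (hfF : ∀ w ∈ f.1, w ∈ F) :
    Disjoint (insert f (edgesToCompl x F ∪ edgesToCompl y F))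
      (insert e (edgesToCompl u F ∪ edgesToCompl v F)) := by
  have hne : e ≠ f := fun h => hef u (by simp [he]) (by simp [← h, he])
  obtain ⟨⟨hux, huy⟩, hvx, hvy⟩ : (u ≠ x ∧ u ≠ y) ∧ v ≠ x ∧ v ≠ y := by simpa [he, hf] using hef
  have hx : x ∈ F := hfF x (by simp [hf])
  have hy : y ∈ F := hfF y (by simp [hf])
  simp only [disjoint_insert_left, disjoint_insert_right, disjoint_union_left,
    disjoint_union_right, mem_insert, mem_union, hne, notMem_edgesToCompl heF,
    notMem_edgesToCompl hfF, or_self, not_false_eq_true, true_and]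
  exact ⟨⟨disjoint_edgesToCompl hx hux.symm, disjoint_edgesToCompl hy huy.symm⟩,
    disjoint_edgesToCompl hx hvx.symm, disjoint_edgesToCompl hy hvy.symm⟩

lemma card_filter_mem_mutualNbr_and_mem_le (k : ℕ) {e f : EdgeType n}
    (hef : ∀ v ∈ e.1, v ∉ f.1) :
    (#{σ : Ord n | e ∈ mutualNbr k σ.symm ∧ f ∈ mutualNbr k σ.symm} : ℝ) ≤
      earlyProb k (n - 4) (n - 4) ^ 2 * Fintype.card (Ord n) := by
  obtain ⟨u, v, he⟩ := exists_val_eq e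
  obtain ⟨x, y, hf⟩ := exists_val_eq f
  obtain ⟨F, heF, hfF, hF⟩ : ∃ F : Finset (Fin n), (∀ w ∈ e.1, w ∈ F) ∧ (∀ w ∈ f.1, w ∈ F) ∧
      #F = 4 := by
    have huv := ne_of_val_eq he
    have hxy := ne_of_val_eq hf
    exact ⟨{u, v, x, y}, by simp [he], by simp [hf], by simp_all⟩
  have hindep := (dependsOn_card_predecessors_lt_and_lt (β := Fin (numEdges n)) (edgesToCompl x F)
    (edgesToCompl y F) f k).mono (Set.subset_compl_iff_disjoint_right.2
      (disjoint_coe.2 (disjoint_insert_edgesToCompl_union he hf hef heF hfF)))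
  calc (#{σ : Ord n | e ∈ mutualNbr k σ.symm ∧ f ∈ mutualNbr k σ.symm} : ℝ)
      ≤ #{σ : Ord n | (#(predecessors σ.symm (edgesToCompl u F) e) < k ∧
          #(predecessors σ.symm (edgesToCompl v F) e) < k) ∧
          #(predecessors σ.symm (edgesToCompl x F) f) < k ∧
          #(predecessors σ.symm (edgesToCompl y F) f) < k} := by
        refine Nat.cast_le.2 (card_le_card (monotone_filter_right _ fun σ _ ⟨heσ, hfσ⟩ => ?_))
        have hearly := @card_predecessors_edgesToCompl_lt_of_mem_mutualNbr
        exact ⟨⟨hearly heσ (by simp [he]) F, hearly heσ (by simp [he]) F⟩,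
          hearly hfσ (by simp [hf]) F, hearly hfσ (by simp [hf]) F⟩
    _ = earlyProb k (n - 4) (n - 4) ^ 2 * Fintype.card (Ord n) := by
        rw [card_filter_card_predecessors_edgesToCompl_lt_and he (heF u (by simp [he]))
          (heF v (by simp [he])) hindep, card_filter_card_predecessors_edgesToCompl_lt hf
          (hfF x (by simp [hf])) (hfF y (by simp [hf])), hF]
        ring

end MutualNeighbours

section Moments

variable {n : ℕ}

instance instNonemptyOrd : Nonempty (Ord n) :=
  ⟨Fintype.equivOfCardEq (by rw [Fintype.card_fin, card_edgeType])⟩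

lemma expect_boole {α : Type*} [Fintype α] (p : α → Prop) [DecidablePred p] :
    𝔼 a, (if p a then (1 : ℝ) else 0) = #{a | p a} / Fintype.card α := by
  rw [Fintype.expect_eq_sum_div_card, sum_boole]

lemma expect_card_mutualNbr (k n : ℕ) :
    𝔼 σ : Ord n, (#(mutualNbr k σ.symm) : ℝ) = numEdges n * earlyProb k (n - 2) (n - 2) := by
  calc 𝔼 σ : Ord n, (#(mutualNbr k σ.symm) : ℝ)
      = ∑ e : EdgeType n, 𝔼 σ : Ord n, if e ∈ mutualNbr k σ.symm then (1 : ℝ) else 0 := by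
        rw [← expect_sum_comm]
        simp
    _ = ∑ _e : EdgeType n, earlyProb k (n - 2) (n - 2) := by
        refine sum_congr rfl fun e _ => ?_
        rw [expect_boole, card_filter_mem_mutualNbr, mul_div_cancel_right₀ _ (by simp)]
    _ = numEdges n * earlyProb k (n - 2) (n - 2) := by
        rw [sum_const, card_univ, card_edgeType, nsmul_eq_mul]

lemma sq_card_mutualNbr_le {ι : Type*} [LinearOrder ι] (k : ℕ) {g : EdgeType n → ι}
    (hg : g.Injective) :
    #(mutualNbr k g) ^ 2 ≤ n * k ^ 2 + #{p : EdgeType n × EdgeType n |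
      (∀ v ∈ p.1.1, v ∉ p.2.1) ∧ p.1 ∈ mutualNbr k g ∧ p.2 ∈ mutualNbr k g} := by
  have hcover : mutualNbr k g ×ˢ mutualNbr k g ⊆
      univ.biUnion (fun v => firstEdges k g v ×ˢ firstEdges k g v) ∪
        ({p | (∀ v ∈ p.1.1, v ∉ p.2.1) ∧ p.1 ∈ mutualNbr k g ∧ p.2 ∈ mutualNbr k g} :
          Finset (EdgeType n × EdgeType n)) := by
    rintro ⟨e, f⟩ hef
    rw [mem_product] at hef
    by_cases hdisj : ∀ v ∈ e.1, v ∉ f.1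
    · exact mem_union_right _ ((mem_filter_univ _).2 ⟨hdisj, hef⟩)
    · push Not at hdisj
      obtain ⟨v, hve, hvf⟩ := hdisj
      exact mem_union_left _ (mem_biUnion.2 ⟨v, mem_univ v,
        mk_mem_product (mem_mutualNbr.1 hef.1 v hve) (mem_mutualNbr.1 hef.2 v hvf)⟩)
  have hstars : #(univ.biUnion fun v => firstEdges k g v ×ˢ firstEdges k g v) ≤ n * k ^ 2 := by
    refine (card_biUnion_le_card_mul _ _ (k ^ 2) fun v _ => ?_).trans_eq (by simp)
    rw [card_product, ← sq, card_firstEdges k hg]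
    gcongr
    exact min_le_left _ _
  rw [sq, ← card_product]
  exact (card_le_card hcover).trans ((card_union_le _ _).trans (by gcongr))

lemma expect_sq_card_mutualNbr_le (k n : ℕ) :
    𝔼 σ : Ord n, (#(mutualNbr k σ.symm) : ℝ) ^ 2 ≤
      n * k ^ 2 + (numEdges n * earlyProb k (n - 4) (n - 4)) ^ 2 := by
  set D : Finset (EdgeType n × EdgeType n) := {p | ∀ v ∈ p.1.1, v ∉ p.2.1} with hD
  have hDcard : (#D : ℝ) ≤ numEdges n ^ 2 := by
    have := card_le_univ D
    rw [Fintype.card_prod, card_edgeType, ← sq] at this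
    exact_mod_cast this
  calc 𝔼 σ : Ord n, (#(mutualNbr k σ.symm) : ℝ) ^ 2
      ≤ 𝔼 σ : Ord n, (n * k ^ 2 + ∑ p ∈ D,
          if p.1 ∈ mutualNbr k σ.symm ∧ p.2 ∈ mutualNbr k σ.symm then (1 : ℝ) else 0) := by
        refine expect_le_expect fun σ _ => ?_
        rw [sum_boole, hD, filter_filter]
        exact_mod_cast sq_card_mutualNbr_le k σ.symm.injective
    _ = n * k ^ 2 + ∑ p ∈ D, 𝔼 σ : Ord n,
          if p.1 ∈ mutualNbr k σ.symm ∧ p.2 ∈ mutualNbr k σ.symm then (1 : ℝ) else 0 := by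
        rw [expect_add_distrib, Fintype.expect_const, expect_sum_comm]
    _ ≤ n * k ^ 2 + ∑ _p ∈ D, earlyProb k (n - 4) (n - 4) ^ 2 := by
        gcongr with p hp
        rw [expect_boole, div_le_iff₀ (by positivity)]
        exact card_filter_mem_mutualNbr_and_mem_le k ((mem_filter_univ p).1 hp)
    _ ≤ n * k ^ 2 + (numEdges n * earlyProb k (n - 4) (n - 4)) ^ 2 := by
        rw [sum_const, nsmul_eq_mul, mul_pow]
        gcongr

end Moments

section Concentration

lemma tendsto_expect_card_mutualNbr_div_sub_sq (k : ℕ) :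
    Tendsto (fun n : ℕ => 𝔼 σ : Ord n, ((#(mutualNbr k σ.symm) : ℝ) / n - (k - oConst k)) ^ 2)
      atTop (𝓝 0) := by
  set c : ℝ := k - oConst k
  have hbound : Tendsto (fun n : ℕ => (k ^ 2 / n : ℝ) +
      (numEdges n * earlyProb k (n - 4) (n - 4) / n) ^ 2 -
      2 * c * (numEdges n * earlyProb k (n - 2) (n - 2) / n) + c ^ 2) atTop (𝓝 0) := by
    have := (((tendsto_const_div_atTop_nhds_zero_nat ((k : ℝ) ^ 2)).add
      ((tendsto_numEdges_mul_earlyProb_div k 4).pow 2)).sub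
      ((tendsto_numEdges_mul_earlyProb_div k 2).const_mul (2 * c))).add_const (c ^ 2)
    convert this using 2
    ring
  refine squeeze_zero' (.of_forall fun n => expect_nonneg fun σ _ => sq_nonneg _) ?_ hbound
  filter_upwards [eventually_gt_atTop 0] with n hn
  calc 𝔼 σ : Ord n, ((#(mutualNbr k σ.symm) : ℝ) / n - c) ^ 2
      = (𝔼 σ : Ord n, (#(mutualNbr k σ.symm) : ℝ) ^ 2) / n ^ 2 -
          2 * c * ((𝔼 σ : Ord n, (#(mutualNbr k σ.symm) : ℝ)) / n) + c ^ 2 := by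
        rw [expect_div, expect_div, mul_expect, ← expect_sub_distrib,
          ← Fintype.expect_const (ι := Ord n) (c ^ 2), ← expect_add_distrib]
        exact expect_congr rfl fun σ _ => by ring
    _ ≤ (n * k ^ 2 + (numEdges n * earlyProb k (n - 4) (n - 4)) ^ 2) / n ^ 2 -
          2 * c * (numEdges n * earlyProb k (n - 2) (n - 2) / n) + c ^ 2 := by
        rw [expect_card_mutualNbr]
        gcongr
        exact expect_sq_card_mutualNbr_le k n
    _ = _ := by field_simp

lemma tendsto_expect_card_nearestNbr_div_sub_sq (k : ℕ) :
    Tendsto (fun n : ℕ => 𝔼 σ : Ord n, ((#(nearestNbr k σ) : ℝ) / n - oConst k) ^ 2)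
      atTop (𝓝 0) := by
  refine (tendsto_expect_card_mutualNbr_div_sub_sq k).congr' ?_
  filter_upwards [eventually_gt_atTop k] with n hn
  refine expect_congr rfl fun σ _ => ?_
  have hcard : (#(nearestNbr k σ) : ℝ) + #(mutualNbr k σ.symm) = k * n := mod_cast
    card_nearestNbr_add_card_mutualNbr hn σ
  have hn0 : (n : ℝ) ≠ 0 := by exact_mod_cast (pos_of_gt hn).ne'
  rw [eq_sub_of_add_eq hcard, sub_div, mul_div_cancel_right₀ _ hn0]
  ring

lemma Pr_eq_expect {n : ℕ} (p : Ord n → Prop) [DecidablePred p] :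
    Pr p = 𝔼 σ, if p σ then (1 : ℝ) else 0 := by
  rw [expect_boole, Pr]
  congr!

lemma tendsto_Pr_abs_le_of_tendsto_expect_sq {X : ∀ n, Ord n → ℝ}
    (hX : Tendsto (fun n => 𝔼 σ, X n σ ^ 2) atTop (𝓝 0)) {η : ℝ} (hη : 0 < η) :
    Tendsto (fun n => Pr fun σ => |X n σ| ≤ η) atTop (𝓝 1) := by
  have hlower : Tendsto (fun n => 1 - (𝔼 σ, X n σ ^ 2) / η ^ 2) atTop (𝓝 1) := by
    simpa using (hX.div_const (η ^ 2)).const_sub 1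
  refine tendsto_of_tendsto_of_tendsto_of_le_of_le hlower tendsto_const_nhds (fun n => ?_)
    fun n => ?_
  · calc 1 - (𝔼 σ, X n σ ^ 2) / η ^ 2 = 𝔼 σ, (1 - X n σ ^ 2 / η ^ 2) := by
          rw [expect_sub_distrib, Fintype.expect_const, expect_div]
      _ ≤ 𝔼 σ, (if |X n σ| ≤ η then (1 : ℝ) else 0) := by
          refine expect_le_expect fun σ _ => ?_
          split_ifs with hσ
          · exact sub_le_self _ (by positivity)
          · rw [sub_nonpos, one_le_div₀ (by positivity), ← sq_abs (X n σ)]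
            gcongr
            exact (not_le.1 hσ).le
      _ = Pr fun σ => |X n σ| ≤ η := (Pr_eq_expect _).symm
  · exact div_le_one_of_le₀ (Nat.cast_le.2 (card_le_univ _)) (Nat.cast_nonneg _)

end Concentration

/-- For every fixed `k ≥ 1`, with high probability the number of edges
of `O_k` equals `(o_k + o(1))·n`. -/
theorem nearestNbr_card_edges (k : ℕ) (hk : 1 ≤ k) :
    ∀ η : ℝ, 0 < η →
      Filter.Tendsto
        (fun n : ℕ => Pr (fun σ : Ord n =>
          |((nearestNbr k σ).card : ℝ) - oConst k * n| ≤ η * n))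
        Filter.atTop (nhds 1) := by
  intro η hη
  refine (tendsto_Pr_abs_le_of_tendsto_expect_sq
    (tendsto_expect_card_nearestNbr_div_sub_sq k) hη).congr' ?_
  filter_upwards [eventually_gt_atTop 0] with n hn
  have hn0 : (0 : ℝ) < n := by exact_mod_cast hn
  congr! 2 with σ
  rw [div_sub' hn0.ne', abs_div, abs_of_pos hn0, div_le_iff₀ hn0, mul_comm (n : ℝ)]

end RGP
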